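/- Suppose the digraph is acyclic, all edge weights are positive, the digraph has a globally reachable vertex, and the first n−1 edges form a rooted in-branching with root the vertex indexed n−1. Let k be any edge index and let δ ∈ ℝ satisfy |δ| · |(Rᵀ * (R̃ * W * Rᵀ)⁻¹ * R̃) k k| < 1, i.e., |δ| is strictly less than the absolute value of the reciprocal of the (k,k) entry of Rᵀ * (R̃ * W * Rᵀ)⁻¹ * R̃. Let W_δ be the m×m diagonal matrix equal to W except that its (k,k) entry is w k + δ. Then every eigenvalue λ ∈ ℂ of the perturbed reduced edge Laplacian Eτᵀ * A * W_δ * Rᵀ (viewed as a complex matrix) has strictly positive real part. -/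

import Mathlib

open Matrix

theorem aux_eig {ι K : Type*} [Fintype ι] [DecidableEq ι] [Field K]
    (r : ι → ι → Prop) (htr : ∀ a b c, r a b → r b c → r a c) (hir : ∀ a, ¬ r a a)
    (Q : Matrix ι ι K) (hQ : ∀ j i, Q j i ≠ 0 → i = j ∨ r j i)
    (x : ι → K) (hx : x ≠ 0) (μ : K) (h : Q *ᵥ x = μ • x) : ∃ j, μ = Q j j := by
  have wf : WellFounded (fun a b => r b a) := by
    have : IsTrans ι (fun a b => r b a) := ⟨fun a b c h1 h2 => htr _ _ _ h2 h1⟩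
    have : Std.Irrefl (fun a b : ι => r b a) := ⟨hir⟩
    exact Finite.wellFounded_of_trans_of_irrefl _
  obtain ⟨j0, hj0⟩ := Function.ne_iff.1 hx
  obtain ⟨j, hj, hmin⟩ := wf.has_min {j | x j ≠ 0} ⟨j0, hj0⟩
  refine ⟨j, ?_⟩
  have h1 := congrFun h j
  rw [Matrix.mulVec, dotProduct, Finset.sum_eq_single j] at h1
  · simp only [Pi.smul_apply, smul_eq_mul] at h1
    exact (mul_right_cancel₀ hj h1).symm
  · intro i _ hij
    by_contra hne
    rcases hQ j i (left_ne_zero_of_mul hne) with h2 | h2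
    · exact hij h2
    · exact hmin i (right_ne_zero_of_mul hne) h2
  · simp

theorem aux_col {ι K : Type*} [Fintype ι] [DecidableEq ι] [Field K]
    (r : ι → ι → Prop) (htr : ∀ a b c, r a b → r b c → r a c) (hir : ∀ a, ¬ r a a)
    (Q : Matrix ι ι K) (hQ : ∀ j i, Q j i ≠ 0 → i = j ∨ r j i) (hd : ∀ j, Q j j ≠ 0)
    (z : ι → K) (i0 : ι) (h : Q *ᵥ z = Pi.single i0 1) :
    (∀ j, z j ≠ 0 → j = i0 ∨ r j i0) ∧ Q i0 i0 * z i0 = 1 := by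
  have wf : WellFounded (fun a b => r b a) := by
    have : IsTrans ι (fun a b => r b a) := ⟨fun a b c h1 h2 => htr _ _ _ h2 h1⟩
    have : Std.Irrefl (fun a b : ι => r b a) := ⟨hir⟩
    exact Finite.wellFounded_of_trans_of_irrefl _
  have key : ∀ j, z j ≠ 0 → j = i0 ∨ r j i0 := by
    intro j
    induction j using wf.induction with
    | _ j ih =>
      intro hj
      by_contra hcon
      push Not at hcon
      have h1 := congrFun h j
      rw [Matrix.mulVec, dotProduct, Finset.sum_eq_single j, Pi.single_eq_of_ne hcon.1] at h1
      · exact mul_ne_zero (hd j) hj h1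
      · intro i _ hij
        by_contra hne
        rcases hQ j i (left_ne_zero_of_mul hne) with h2 | h2
        · exact hij h2
        · rcases ih i h2 (right_ne_zero_of_mul hne) with h3 | h3
          · exact hcon.2 (h3 ▸ h2)
          · exact hcon.2 (htr _ _ _ h2 h3)
      · simp
  refine ⟨key, ?_⟩
  have h1 := congrFun h i0
  rw [Matrix.mulVec, dotProduct, Finset.sum_eq_single i0, Pi.single_eq_same] at h1
  · exact h1
  · intro i _ hij
    by_contra hne
    rcases hQ i0 i (left_ne_zero_of_mul hne) with h2 | h2
    · exact hij h2
    · rcases key i (right_ne_zero_of_mul hne) with h3 | h3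
      · exact hij h3
      · exact hir _ (htr _ _ _ h2 h3)
  · simp

theorem aux_unit {ι : Type*} [Fintype ι] [DecidableEq ι] (Q : Matrix ι ι ℝ)
    (h : ∀ z, Q *ᵥ z = 0 → z = 0) : IsUnit Q.det := by
  rw [isUnit_iff_ne_zero]
  intro h0
  obtain ⟨v, hv, hv0⟩ := Matrix.exists_mulVec_eq_zero_iff.2 h0
  exact hv (h v hv0)

/-- For an acyclic weighted digraph with positive weights, a globally
reachable vertex, and whose first `n-1` edges form a rooted in-branching with root the
vertex `n-1`, if the weight of edge `k` is perturbed by `δ` with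
`|δ| · |(Rᵀ (R̃ W Rᵀ)⁻¹ R̃) k k| < 1`, then all complex eigenvalues of the perturbed
reduced edge Laplacian `Eτᵀ * A * W_δ * Rᵀ` have strictly positive real part. -/
theorem perturbed_reduced_edgeLaplacian_robust_gain_margin
    (n m : ℕ) (hn : 2 ≤ n) (hm : 1 ≤ m) (hmn : n - 1 ≤ m)
    (tail head : Fin m → Fin n) (hth : ∀ e, tail e ≠ head e)
    (w : Fin m → ℝ) (hw : ∀ e, 0 < w e)
    (E : Matrix (Fin n) (Fin m) ℝ)
    (hE : ∀ v e, E v e = if v = tail e then 1 else if v = head e then -1 else 0)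
    (A : Matrix (Fin n) (Fin m) ℝ)
    (hA : ∀ v e, A v e = if v = tail e then 1 else 0)
    (W : Matrix (Fin m) (Fin m) ℝ) (hW : W = Matrix.diagonal w)
    (hacyclic : ∀ v : Fin n,
      ¬ Relation.TransGen (fun a b => ∃ e, tail e = a ∧ head e = b) v v)
    (hgr : ∃ v : Fin n, ∀ u : Fin n,
      Relation.ReflTransGen (fun a b => ∃ e, tail e = a ∧ head e = b) u v)
    (root : Fin n) (hroot : root = ⟨n - 1, by omega⟩)
    -- the first n-1 edges form a rooted in-branching with root `root`:
    (hinj : Function.Injective (fun i : Fin (n - 1) => tail ⟨i.val, lt_of_lt_of_le i.2 hmn⟩))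
    (hnotroot : ∀ i : Fin (n - 1), tail ⟨i.val, lt_of_lt_of_le i.2 hmn⟩ ≠ root)
    (hsurj : ∀ v : Fin n, v ≠ root → ∃ i : Fin (n - 1), tail ⟨i.val, lt_of_lt_of_le i.2 hmn⟩ = v)
    (hreach : ∀ v : Fin n, Relation.ReflTransGen
      (fun a b => ∃ e : Fin m, e.val < n - 1 ∧ tail e = a ∧ head e = b) v root)
    (Eτ : Matrix (Fin n) (Fin (n - 1)) ℝ)
    (hEτ : Eτ = E.submatrix id (fun i : Fin (n - 1) => ⟨i.val, lt_of_lt_of_le i.2 hmn⟩))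
    (Ec : Matrix (Fin n) (Fin (m - (n - 1))) ℝ)
    (hEc : Ec = E.submatrix id
      (fun j : Fin (m - (n - 1)) => ⟨n - 1 + j.val, by have := j.2; omega⟩))
    (Aτ : Matrix (Fin n) (Fin (n - 1)) ℝ)
    (hAτ : Aτ = A.submatrix id (fun i : Fin (n - 1) => ⟨i.val, lt_of_lt_of_le i.2 hmn⟩))
    (Ac : Matrix (Fin n) (Fin (m - (n - 1))) ℝ)
    (hAc : Ac = A.submatrix id
      (fun j : Fin (m - (n - 1)) => ⟨n - 1 + j.val, by have := j.2; omega⟩))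
    (Tτ : Matrix (Fin (n - 1)) (Fin (m - (n - 1))) ℝ)
    (hTτ : Tτ = (Eτᵀ * Eτ)⁻¹ * Eτᵀ * Ec)
    (R : Matrix (Fin (n - 1)) (Fin m) ℝ)
    (hR : ∀ (i : Fin (n - 1)) (j : Fin m), R i j =
      if h : j.val < n - 1 then (if i.val = j.val then 1 else 0)
      else Tτ i ⟨j.val - (n - 1), by have := j.2; omega⟩)
    (T'τ : Matrix (Fin (n - 1)) (Fin (m - (n - 1))) ℝ)
    (hT'τ : T'τ = (Aτᵀ * Aτ)⁻¹ * Aτᵀ * Ac)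
    (R' : Matrix (Fin (n - 1)) (Fin m) ℝ)
    (hR' : ∀ (i : Fin (n - 1)) (j : Fin m), R' i j =
      if h : j.val < n - 1 then (if i.val = j.val then 1 else 0)
      else T'τ i ⟨j.val - (n - 1), by have := j.2; omega⟩)
    (k : Fin m) (δ : ℝ)
    (hδ : |δ| * |(Rᵀ * (R' * W * Rᵀ)⁻¹ * R') k k| < 1)
    (Wδ : Matrix (Fin m) (Fin m) ℝ)
    (hWδ : Wδ = Matrix.diagonal (fun e => if e = k then w k + δ else w e)) :
    ∀ μ : ℂ, (∃ x : Fin (n - 1) → ℂ, x ≠ 0 ∧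
        ((Eτᵀ * A * Wδ * Rᵀ).map Complex.ofReal).mulVec x = μ • x) →
      0 < μ.re := by
  set t : Fin (n - 1) → Fin m := fun i => ⟨i.val, lt_of_lt_of_le i.2 hmn⟩ with ht
  set step : Fin n → Fin n → Prop := fun a b => ∃ e, tail e = a ∧ head e = b with hstep
  have htj : ∀ i j, tail (t i) = tail (t j) → i = j := fun i j h => hinj h
  have hreach' : ∀ v, Relation.ReflTransGen step v root := fun v =>
    Relation.ReflTransGen.mono (fun a b ⟨e, _, h1, h2⟩ => ⟨e, h1, h2⟩) _ _ (hreach v)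
  have htail : ∀ e, tail e ≠ root := by
    intro e he
    exact hacyclic root (Relation.TransGen.head' ⟨e, he, rfl⟩ (hreach' (head e)))
  have hidx : ∀ e, ∃ i, tail (t i) = tail e := fun e => hsurj _ (htail e)
  have hAτe : ∀ v i, Aτ v i = if v = tail (t i) then 1 else 0 := by
    intro v i; rw [hAτ]; simp [hA, ht]
  have hEτe : ∀ v i, Eτ v i = E v (t i) := by
    intro v i; rw [hEτ]; simp [ht]
  -- product with Aτᵀ picks the row
  have hAτm : ∀ {l : ℕ} (X : Matrix (Fin n) (Fin l) ℝ) i e, (Aτᵀ * X) i e = X (tail (t i)) e := by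
    intro l X i e
    simp [Matrix.mul_apply, hAτe]
  have hmAτ : ∀ {l : ℕ} (X : Matrix (Fin l) (Fin n) ℝ) e i, (X * Aτ) e i = X e (tail (t i)) := by
    intro l X i e
    simp [Matrix.mul_apply, hAτe]
  have hAA : Aτᵀ * Aτ = 1 := by
    ext i j
    rw [hAτm, hAτe, Matrix.one_apply]
    by_cases h : i = j
    · simp [h]
    · rw [if_neg h, if_neg (fun h' => h (htj _ _ h'))]
  have hR'1 : R' = Aτᵀ * A := by
    ext i j
    rw [hR', hAτm, hA]
    split_ifs with h1 h2 h3 h3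
    · rfl
    · exact absurd (by congr 1; ext; exact h2) h3
    · exact absurd (congrArg Fin.val (htj i ⟨j.val, h1⟩ h3)) h2
    · rfl
    all_goals
      rw [hT'τ, hAA, inv_one, Matrix.one_mul, hAτm, hAc]
      have : (⟨n - 1 + (j.val - (n - 1)), by have := j.2; omega⟩ : Fin m) = j := by
        ext; simp; omega
      rw [Matrix.submatrix_apply, this, id, hA]
      first | exact if_pos ‹_› | exact if_neg ‹_›
  have hAR : A = Aτ * R' := by
    ext v e
    obtain ⟨i, hi⟩ := hidx e
    rw [hR'1, Matrix.mul_apply, Finset.sum_eq_single i]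
    · rw [hAτe, hAτm, hA, hA, hi]; simp
    · intro b _ hb
      rw [hAτm, hA, if_neg, mul_zero]
      exact fun h => hb (htj _ _ (h.trans hi.symm))
    · simp
  -- kernel
  have hEe : ∀ (u : Fin n → ℝ) e, (Eᵀ *ᵥ u) e = u (tail e) - u (head e) := by
    intro u e
    have : ∀ v, E v e = (if v = tail e then 1 else 0) - (if v = head e then 1 else 0) := by
      intro v; rw [hE]
      by_cases h1 : v = tail e
      · have : v ≠ head e := h1 ▸ hth e
        simp [h1, hth e]
      · simp [h1]; split_ifs <;> simp
    simp [Matrix.mulVec, dotProduct, this, sub_mul, Finset.sum_sub_distrib]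
  have hker : ∀ u : Fin n → ℝ, Eτᵀ *ᵥ u = 0 → ∀ v, u v = u root := by
    intro u hu v
    refine Relation.ReflTransGen.head_induction_on (motive := fun a _ => u a = u root) (hreach v) rfl ?_
    rintro a c ⟨e, he, h1, h2⟩ _ ih
    have h3 := congrFun hu ⟨e.val, he⟩
    have h4 : (Eτᵀ *ᵥ u) ⟨e.val, he⟩ = (Eᵀ *ᵥ u) e := by
      simp [Matrix.mulVec, dotProduct, hEτe, ht]
    rw [h4, hEe, h1, h2] at h3
    simp at h3
    linarith
  have hsumE : ∀ e, ∑ v, E v e = 0 := by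
    intro e
    have := hEe (fun _ => 1) e
    simpa [Matrix.mulVec, dotProduct] using this
  have hn0 : (n : ℝ) ≠ 0 := by positivity
  have hker0 : ∀ u : Fin n → ℝ, Eτᵀ *ᵥ u = 0 → ∑ v, u v = 0 → u = 0 := by
    intro u hu hs
    have h1 := hker u hu
    rw [Finset.sum_congr rfl (fun v _ => h1 v)] at hs
    simp at hs
    ext v
    rw [h1 v]
    rcases hs with h | h
    · omega
    · exact h
  set S := Eτᵀ * Aτ with hS
  have hSu : IsUnit S.det := by
    apply aux_unit
    intro z hz
    rw [hS, ← Matrix.mulVec_mulVec] at hz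
    have h1 := hker _ hz
    have h2 : (Aτ *ᵥ z) root = 0 := by
      simp only [Matrix.mulVec, dotProduct]
      refine Finset.sum_eq_zero fun i _ => ?_
      rw [hAτe, if_neg (htail _).symm, zero_mul]
    have h3 : Aτ *ᵥ z = 0 := by ext v; rw [h1, h2]; rfl
    have := congrArg (fun y => Aτᵀ *ᵥ y) h3
    simpa [Matrix.mulVec_mulVec, hAA] using this
  have hsumEτ : ∀ z : Fin (n-1) → ℝ, ∑ v, (Eτ *ᵥ z) v = 0 := by
    intro z
    simp only [Matrix.mulVec, dotProduct]
    rw [Finset.sum_comm]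
    refine Finset.sum_eq_zero fun i _ => ?_
    rw [← Finset.sum_mul]
    simp [hEτe, hsumE]
  have hGu : IsUnit (Eτᵀ * Eτ).det := by
    apply aux_unit
    intro z hz
    rw [← Matrix.mulVec_mulVec] at hz
    have h1 := hker0 _ hz (hsumEτ z)
    have h2 : Sᵀ *ᵥ z = 0 := by
      rw [hS, Matrix.transpose_mul, Matrix.transpose_transpose, ← Matrix.mulVec_mulVec, h1,
        Matrix.mulVec_zero]
    have hSt : IsUnit Sᵀ.det := by rwa [Matrix.det_transpose]
    have := congrArg (fun y => Sᵀ⁻¹ *ᵥ y) h2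
    simpa [Matrix.mulVec_mulVec, Matrix.nonsing_inv_mul _ hSt] using this
  have hR1 : R = (Eτᵀ * Eτ)⁻¹ * Eτᵀ * E := by
    ext i j
    rw [hR]
    by_cases h1 : j.val < n - 1
    · rw [dif_pos h1]
      have h2 : ((Eτᵀ * Eτ)⁻¹ * Eτᵀ * E) i j = ((Eτᵀ * Eτ)⁻¹ * Eτᵀ * Eτ) i ⟨j.val, h1⟩ := by
        rw [Matrix.mul_apply, Matrix.mul_apply]
        simp [hEτe, ht]
      rw [h2, Matrix.mul_assoc, Matrix.nonsing_inv_mul _ hGu, Matrix.one_apply]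
      simp [Fin.ext_iff]
    · rw [dif_neg h1, hTτ, Matrix.mul_apply, Matrix.mul_apply, hEc]
      have : (⟨n - 1 + (j.val - (n - 1)), by have := j.2; omega⟩ : Fin m) = j := by
        ext; simp; omega
      simp [this]
  have hER : E = Eτ * R := by
    rw [← sub_eq_zero]
    ext v e
    have h0 : Eτᵀ * (E - Eτ * R) = 0 := by
      rw [Matrix.mul_sub, hR1, Matrix.mul_assoc _ Eτᵀ E, ← Matrix.mul_assoc, ← Matrix.mul_assoc,
        Matrix.mul_nonsing_inv _ hGu, Matrix.one_mul, sub_self]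
    have h1 := hker0 (fun v => (E - Eτ * R) v e) ?_ ?_
    · exact congrFun h1 v
    · ext i
      have := congrFun (congrFun h0 i) e
      simpa [Matrix.mul_apply, Matrix.mulVec, dotProduct] using this
    · have h2 := hsumEτ (fun i => R i e)
      simp only [Matrix.sub_apply, Finset.sum_sub_distrib, hsumE]
      simp only [Matrix.mulVec, dotProduct] at h2
      simp [Matrix.mul_apply, h2]
  have hRS : Rᵀ * S = Eᵀ * Aτ := by
    rw [hS, ← Matrix.mul_assoc, ← Matrix.transpose_mul, ← hER]
  -- grounded Laplacian
  let P : (Fin m → ℝ) → Matrix (Fin (n-1)) (Fin (n-1)) ℝ := fun d =>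
    R' * Matrix.diagonal d * (Eᵀ * Aτ)
  have hPe : ∀ d j i, P d j i =
      ∑ e, (if tail (t j) = tail e then 1 else 0) * d e * E (tail (t i)) e := by
    intro d j i
    show (R' * Matrix.diagonal d * (Eᵀ * Aτ)) j i = _
    rw [Matrix.mul_apply]
    refine Finset.sum_congr rfl fun e _ => ?_
    rw [Matrix.mul_diagonal, hmAτ, hR'1, hAτm, hA]; rfl
  let r : Fin (n-1) → Fin (n-1) → Prop := fun j i =>
    Relation.TransGen step (tail (t j)) (tail (t i))
  have htr : ∀ a b c, r a b → r b c → r a c := fun a b c h1 h2 => h1.trans h2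
  have hir : ∀ a, ¬ r a a := fun a => hacyclic _
  have hPr : ∀ d j i, P d j i ≠ 0 → i = j ∨ r j i := by
    intro d j i h
    rw [hPe] at h
    obtain ⟨e, _, he⟩ := Finset.exists_ne_zero_of_sum_ne_zero h
    by_cases h1 : tail (t j) = tail e
    · have h2 := right_ne_zero_of_mul he
      rw [hE] at h2
      by_cases h3 : tail (t i) = tail e
      · exact Or.inl (htj _ _ (h3.trans h1.symm))
      · rw [if_neg h3] at h2
        by_cases h4 : tail (t i) = head e
        · exact Or.inr (Relation.TransGen.single ⟨e, h1.symm, h4.symm⟩)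
        · simp [h4] at h2
    · simp [h1] at he
  have hPd : ∀ d j, P d j j = ∑ e, (if tail (t j) = tail e then d e else 0) := by
    intro d j
    rw [hPe]
    refine Finset.sum_congr rfl fun e _ => ?_
    split_ifs with h
    · rw [hE, if_pos h]; ring
    · ring
  have hPpos : ∀ j, 0 < P w j j := by
    intro j
    rw [hPd]
    refine Finset.sum_pos' (fun e _ => ?_) ⟨t j, Finset.mem_univ _, ?_⟩
    · split_ifs
      · exact (hw e).le
      · exact le_rfl
    · simp [hw]
  have hPu : IsUnit (P w).det := by
    apply aux_unit
    intro z hz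
    by_contra hz0
    obtain ⟨j, hj⟩ := aux_eig r htr hir (P w) (hPr w) z hz0 0 (by rw [hz, zero_smul])
    exact (hPpos j).ne hj
  obtain ⟨i0, hi0⟩ := hidx k
  -- the (k,k) entry
  have hent : (Rᵀ * (R' * W * Rᵀ)⁻¹ * R') k k = (P w i0 i0)⁻¹ := by
    have hNS : P w = (R' * W * Rᵀ) * S := by
      show R' * Matrix.diagonal w * (Eᵀ * Aτ) = _
      rw [Matrix.mul_assoc (R' * W), hRS, hW]
    have hN : (R' * W * Rᵀ)⁻¹ = S * (P w)⁻¹ := by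
      rw [hNS, Matrix.mul_inv_rev, ← Matrix.mul_assoc, Matrix.mul_nonsing_inv _ hSu, Matrix.one_mul]
    rw [hN, ← Matrix.mul_assoc, hRS, Matrix.mul_assoc]
    set z : Fin (n-1) → ℝ := fun i => ((P w)⁻¹ * R') i k with hz
    have hPz : P w *ᵥ z = Pi.single i0 1 := by
      have h1 : P w * ((P w)⁻¹ * R') = R' := by
        rw [← Matrix.mul_assoc, Matrix.mul_nonsing_inv _ hPu, Matrix.one_mul]
      ext i
      have h2 := congrFun (congrFun h1 i) k
      rw [Matrix.mul_apply] at h2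
      rw [Matrix.mulVec, dotProduct, h2, hR'1, hAτm, hA, Pi.single_apply, ← hi0]
      by_cases h : i = i0
      · simp [h]
      · rw [if_neg h, if_neg (fun h' => h (htj _ _ h'))]
    obtain ⟨h1, h2⟩ := aux_col r htr hir (P w) (hPr w) (fun j => (hPpos j).ne') z i0 hPz
    rw [Matrix.mul_apply, Finset.sum_eq_single i0]
    · rw [hmAτ, Matrix.transpose_apply, hE, if_pos hi0, one_mul]
      exact eq_inv_of_mul_eq_one_right h2
    · intro i _ hi
      by_contra hne
      rcases h1 i (right_ne_zero_of_mul hne) with h3 | h3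
      · exact hi h3
      · have h4 := left_ne_zero_of_mul hne
        rw [hmAτ, Matrix.transpose_apply, hE, if_neg (fun h' => hi (htj _ _ (h'.trans hi0.symm)))] at h4
        by_cases h5 : tail (t i) = head k
        · exact hir i (htr _ _ _ h3 (Relation.TransGen.single ⟨k, hi0.symm, h5.symm⟩))
        · simp [h5] at h4
    · simp
  have hδ' : |δ| < P w i0 i0 := by
    rw [hent, abs_of_pos (inv_pos.2 (hPpos i0)), ← div_eq_mul_inv, div_lt_one (hPpos i0)] at hδ
    exact hδ
  have hPδ : ∀ j, 0 < P (fun e => if e = k then w k + δ else w e) j j := by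
    intro j
    have h1 : P (fun e => if e = k then w k + δ else w e) j j
        = P w j j + (if j = i0 then δ else 0) := by
      have h2 : (if j = i0 then δ else 0) = ∑ e, (if e = k then (if j = i0 then δ else 0) else 0) := by
        simp
      rw [hPd, hPd, h2, ← Finset.sum_add_distrib]
      refine Finset.sum_congr rfl fun e _ => ?_
      by_cases hek : e = k
      · subst hek
        by_cases hj : j = i0
        · subst hj; simp [hi0]
        · have : tail (t j) ≠ tail e := fun h' => hj (htj _ _ (h'.trans hi0.symm))
          simp [hj, this]
      · simp [hek]
    rw [h1]
    split_ifs with h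
    · rw [h]; linarith [(abs_lt.1 hδ').1]
    · simpa using hPpos j
  rintro μ ⟨x, hx, hMx⟩
  set d : Fin m → ℝ := fun e => if e = k then w k + δ else w e with hd
  have hMP : S⁻¹ * (Eτᵀ * A * Wδ * Rᵀ) = P d * S⁻¹ := by
    have h1 : Eτᵀ * A = S * R' := by rw [hS, Matrix.mul_assoc, ← hAR]
    have h2 : P d = R' * Wδ * Rᵀ * S := by
      rw [Matrix.mul_assoc _ Rᵀ S, hRS, hWδ]
    rw [h2, h1, Matrix.mul_assoc _ S, Matrix.mul_nonsing_inv _ hSu, Matrix.mul_one,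
      Matrix.mul_assoc S, Matrix.mul_assoc S, ← Matrix.mul_assoc S⁻¹,
      Matrix.nonsing_inv_mul _ hSu, Matrix.one_mul]
  have hmapmul : ∀ X Y : Matrix (Fin (n-1)) (Fin (n-1)) ℝ,
      (X * Y).map Complex.ofReal = X.map Complex.ofReal * Y.map Complex.ofReal := fun X Y =>
    Matrix.map_mul (f := Complex.ofRealHom)
  have hSS : S.map Complex.ofReal * S⁻¹.map Complex.ofReal = 1 := by
    rw [← hmapmul, Matrix.mul_nonsing_inv _ hSu]
    exact Matrix.map_one _ Complex.ofReal_zero Complex.ofReal_one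
  have hy : S⁻¹.map Complex.ofReal *ᵥ x ≠ 0 := by
    intro h0
    apply hx
    have := congrArg (fun y => S.map Complex.ofReal *ᵥ y) h0
    simpa only [Matrix.mulVec_mulVec, hSS, Matrix.one_mulVec, Matrix.mulVec_zero] using this
  obtain ⟨j, hj⟩ := aux_eig r htr hir ((P d).map Complex.ofReal) (by
      intro j i h
      apply hPr d j i
      intro h0
      apply h
      rw [Matrix.map_apply, h0, Complex.ofReal_zero]) _ hy μ (by
      rw [Matrix.mulVec_mulVec, ← hmapmul, ← hMP, hmapmul, ← Matrix.mulVec_mulVec, hMx,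
        Matrix.mulVec_smul])
  rw [hj, Matrix.map_apply, Complex.ofReal_re]
  exact hPδ j
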